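/- Let v : ℝ^{m×n} → ℝ be quasiconvex and satisfy |v(s)| ≤ C(1+|s|^p) for all s, with C > 0 and 1 ≤ p < ∞. Then there is a constant α ≥ 0 such that for all s₁, s₂ ∈ ℝ^{m×n}, |v(s₁) - v(s₂)| ≤ α (1 + |s₁|^{p-1} + |s₂|^{p-1}) |s₁ - s₂|. -/

import Mathlib

open MeasureTheory Filter
open scoped RealInnerProductSpace
noncomputable section

/-- `ℝⁿ` with the Euclidean norm. -/
abbrev Vec (n : ℕ) := EuclideanSpace ℝ (Fin n)
/-- `ℝ^{m×n}` with the Euclidean (Frobenius) norm. -/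
abbrev Mat (m n : ℕ) := EuclideanSpace ℝ (Fin m × Fin n)

/-- The gradient (Jacobian) matrix of `u : ℝⁿ → ℝᵐ` at `x`. -/
noncomputable def gradMat {m n : ℕ} (u : Vec n → Vec m) (x : Vec n) : Mat m n :=
  (EuclideanSpace.equiv (Fin m × Fin n) ℝ).symm
    (fun p => fderiv ℝ u x (EuclideanSpace.single p.2 1) p.1)

/-- Morrey quasiconvexity: for every bounded (Lipschitz) test domain `Ω`, every
matrix `s₀` and every Lipschitz map `φ` compactly supported in `Ω` (i.e. `φ ∈ W^{1,∞}₀(Ω;ℝᵐ)`),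
`v(s₀)|Ω| ≤ ∫_Ω v(s₀ + ∇φ)`. -/
def IsQuasiconvex {m n : ℕ} (v : Mat m n → ℝ) : Prop :=
  ∀ (Ω : Set (Vec n)), IsOpen Ω → Bornology.IsBounded Ω →
    ∀ s₀ : Mat m n, ∀ φ : Vec n → Vec m,
      (∃ K : NNReal, LipschitzWith K φ) → tsupport φ ⊆ Ω →
        v s₀ * (volume Ω).toReal ≤ ∫ x in Ω, v (s₀ + gradMat φ x)

/-!
Quasiconvexity at `s` is tested with `φ = ψ • a`, where `ψ` is a piecewise affine tent over half of
a cube. On the copy of the half cube scaled by `r = Λ / (1 + Λ)` the slope of `ψ` is the basis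
vector `e_j`; elsewhere it has length at most `Λ`. That core fills all but a fraction `n / Λ` of
the half cube, so `v s - v (s + a ⊗ e_j) ≤ 4 * M * n / Λ` whenever `|v| ≤ M` on the ball of radius
`Λ * ‖a‖` around `s`. The choice `Λ = R / ‖a‖` gives a Lipschitz estimate with constant of order
`M / R` in the rank-one directions `a ⊗ e_j`, and adding these up column by column gives one in all
directions. With `R = 1 + ‖s₁‖ + ‖s₂‖` the growth condition makes `M / R` of order `R ^ (p - 1)`.

Piecewise affine tents have finitely many gradients, so the integrals in the definition of
quasiconvexity are finite sums even for a non-measurable `v`.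
-/

open Metric Set InnerProductSpace Topology
open scoped Gradient Pointwise

theorem exists_hasFDerivAt_eq_of_piecewise {𝕜 E F ι : Type*} [NontriviallyNormedField 𝕜]
    [NormedAddCommGroup E] [NormedSpace 𝕜 E] [NormedAddCommGroup F] [NormedSpace 𝕜 F] [Finite ι]
    {f : E → F} {f' : E →L[𝕜] F} {g : ι → E → F} {g' : ι → E →L[𝕜] F} {x : E}
    (hf : HasFDerivAt f f' x) (hg : ∀ i, HasFDerivAt (g i) (g' i) x)
    (hfg : ∀ᶠ y in 𝓝 x, ∃ i, f y = g i y) : ∃ i, f' = g' i := by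
  have line (d : E) : ∃ i, f' d = g' i d := by
    by_contra! hne
    have hline : Tendsto (fun t : 𝕜 ↦ x + t • d) (𝓝[≠] 0) (𝓝 x) := by
      have : Continuous fun t : 𝕜 ↦ x + t • d := by fun_prop
      simpa using (this.tendsto 0).mono_left nhdsWithin_le_nhds
    have separate (i : ι) : ∀ᶠ t : 𝕜 in 𝓝[≠] 0, f (x + t • d) ≠ g i (x + t • d) := by
      have hderiv := ((hf.sub (hg i)).hasLineDerivAt d).eventually_ne (c := 0)
        (sub_ne_zero.2 (hne i))
      filter_upwards [hderiv] with t ht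
      exact sub_ne_zero.1 ht
    obtain ⟨t, ⟨i, hi⟩, ht⟩ := ((hline.eventually hfg).and (eventually_all.2 separate)).exists
    exact ht i hi
  -- The finitely many subspaces `ker (f' - g' i)` cover `E`, so one of them is all of `E`.
  obtain ⟨i, hi⟩ := Subspace.exists_eq_top_of_iUnion_eq_univ
    (p := fun i ↦ (f' - g' i : E →L[𝕜] F).toLinearMap.ker)
    (eq_univ_of_forall fun d ↦ by simpa [sub_eq_zero] using line d)
  exact ⟨i, sub_eq_zero.1 <| ContinuousLinearMap.coe_injective <| LinearMap.ker_eq_top.1 hi⟩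

theorem gradient_mem_of_piecewise_affine {E : Type*} [NormedAddCommGroup E]
    [InnerProductSpace ℝ E] [CompleteSpace E] {f : E → ℝ} {S : Set (E × ℝ)} (hS : S.Finite)
    (hf : ∀ y, ∃ p ∈ S, f y = ⟪p.1, y⟫_ℝ + p.2) (x : E) :
    ∇ f x ∈ insert 0 (Prod.fst '' S) := by
  by_cases hd : DifferentiableAt ℝ f x
  · have : Finite S := hS
    obtain ⟨p, hp⟩ := exists_hasFDerivAt_eq_of_piecewise hd.hasFDerivAt
      (g := fun p : S ↦ fun y ↦ ⟪p.1.1, y⟫_ℝ + p.1.2)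
      (fun p ↦ (toDual ℝ E p.1.1).hasFDerivAt.add_const p.1.2)
      (Eventually.of_forall fun y ↦ by simpa using hf y)
    right
    exact ⟨p, p.2, by rw [gradient, hp, LinearIsometryEquiv.symm_apply_apply]⟩
  · exact .inl (gradient_eq_zero_of_not_differentiableAt hd)

theorem one_sub_pow_le_mul_one_sub {r : ℝ} (hr : 0 ≤ r) (n : ℕ) : 1 - r ^ n ≤ n * (1 - r) := by
  have := one_add_mul_sub_le_pow (a := r) (by linarith) n
  linarith

theorem rpow_add_add_le {a b c r : ℝ} (ha : 0 ≤ a) (hb : 0 ≤ b) (hc : 0 ≤ c) (hr : 0 ≤ r) :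
    (a + b + c) ^ r ≤ 3 ^ r * (a ^ r + b ^ r + c ^ r) := by
  have ha' := Real.rpow_nonneg ha r
  have hb' := Real.rpow_nonneg hb r
  have hc' := Real.rpow_nonneg hc r
  obtain ⟨μ, hμ, hsum, hpow⟩ : ∃ μ, 0 ≤ μ ∧ a + b + c ≤ 3 * μ ∧ μ ^ r ≤ a ^ r + b ^ r + c ^ r := by
    by_cases hab : b ≤ a ∧ c ≤ a
    · exact ⟨a, ha, by linarith, by linarith⟩
    by_cases hbc : c ≤ b
    · exact ⟨b, hb, by grind, by linarith⟩
    · exact ⟨c, hc, by grind, by linarith⟩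
  calc (a + b + c) ^ r ≤ (3 * μ) ^ r := by gcongr
    _ = 3 ^ r * μ ^ r := Real.mul_rpow (by norm_num) hμ
    _ ≤ 3 ^ r * (a ^ r + b ^ r + c ^ r) := by gcongr

section Matrices

variable {m n : ℕ}

/-- The rank-one matrix `a ⊗ b`, the gradient of `x ↦ ⟪b, x⟫ • a`. -/
def dyad (a : Vec m) (b : Vec n) : Mat m n :=
  WithLp.toLp 2 fun q ↦ a q.1 * b q.2

@[simp]
theorem dyad_zero (a : Vec m) : dyad a (0 : Vec n) = 0 := by
  ext q
  simp [dyad]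

@[simp]
theorem zero_dyad (b : Vec n) : dyad (0 : Vec m) b = 0 := by
  ext q
  simp [dyad]

theorem norm_dyad (a : Vec m) (b : Vec n) : ‖dyad a b‖ = ‖a‖ * ‖b‖ := by
  rw [← sq_eq_sq₀ (norm_nonneg _) (by positivity), mul_pow]
  simp [EuclideanSpace.norm_sq_eq, dyad, Fintype.sum_prod_type, Finset.sum_mul_sum, mul_pow]

/-- The matrix which agrees with `d` in the columns from `T` and vanishes in the others; it is
used to pass from one matrix to another column by column. -/
def columnPart (d : Mat m n) (T : Finset (Fin n)) : Mat m n :=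
  WithLp.toLp 2 fun q ↦ if q.2 ∈ T then d q else 0

@[simp]
theorem columnPart_empty (d : Mat m n) : columnPart d ∅ = 0 := by
  ext q
  simp [columnPart]

@[simp]
theorem columnPart_univ (d : Mat m n) : columnPart d Finset.univ = d := by
  ext q
  simp [columnPart]

theorem norm_columnPart_le (d : Mat m n) (T : Finset (Fin n)) : ‖columnPart d T‖ ≤ ‖d‖ := by
  rw [← sq_le_sq₀ (norm_nonneg _) (norm_nonneg _), EuclideanSpace.norm_sq_eq,
    EuclideanSpace.norm_sq_eq]
  refine Finset.sum_le_sum fun q _ ↦ ?_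
  by_cases hq : q.2 ∈ T <;> simp [columnPart, hq, sq_nonneg]

theorem exists_columnPart_insert (d : Mat m n) {j : Fin n} {T : Finset (Fin n)} (hj : j ∉ T) :
    ∃ a : Vec m, ‖a‖ ≤ ‖d‖ ∧
      columnPart d (insert j T) = columnPart d T + dyad a (EuclideanSpace.single j 1) := by
  have hcol : columnPart d {j} =
      dyad (WithLp.toLp 2 fun i ↦ d (i, j)) (EuclideanSpace.single j 1) := by
    ext ⟨i, k⟩
    by_cases hk : k = j <;> simp [columnPart, dyad, hk]
  refine ⟨WithLp.toLp 2 fun i ↦ d (i, j), ?_, ?_⟩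
  · simpa [hcol, norm_dyad] using norm_columnPart_le d {j}
  · rw [← hcol]
    ext ⟨i, k⟩
    by_cases hk : k = j <;> simp [columnPart, hk, hj]

theorem measurable_gradMat (φ : Vec n → Vec m) : Measurable (gradMat φ) := by
  refine (EuclideanSpace.equiv (Fin m × Fin n) ℝ).symm.continuous.measurable.comp ?_
  refine measurable_pi_iff.2 fun q ↦ ?_
  exact (EuclideanSpace.proj (𝕜 := ℝ) q.1 : Vec m →L[ℝ] ℝ).continuous.measurable.comp
    (measurable_fderiv_apply_const ℝ φ _)

theorem gradMat_eq_zero_of_notMem_tsupport {φ : Vec n → Vec m} {x : Vec n}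
    (hx : x ∉ tsupport φ) : gradMat φ x = 0 := by
  ext q
  simp [gradMat, fderiv_of_notMem_tsupport ℝ hx]

theorem gradMat_smul_const (ψ : Vec n → ℝ) (a : Vec m) (x : Vec n) :
    gradMat (fun y ↦ ψ y • a) x = dyad a (∇ ψ x) := by
  have hgrad (k : Fin n) : ∇ ψ x k = fderiv ℝ ψ x (EuclideanSpace.single k 1) := by
    rw [← inner_gradient_left, EuclideanSpace.inner_single_right]
    simp
  have hsmul : fderiv ℝ (fun y ↦ ψ y • a) x = (fderiv ℝ ψ x).smulRight a := by
    rcases eq_or_ne a 0 with rfl | ha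
    · ext; simp
    by_cases hψ : DifferentiableAt ℝ ψ x
    · exact fderiv_smul_const hψ a
    · have : ¬ DifferentiableAt ℝ (fun y ↦ ψ y • a) x := fun h ↦ hψ <| by
        have hrecover : (fun y ↦ ⟪a, ψ y • a⟫_ℝ * (‖a‖ ^ 2)⁻¹) = ψ := by
          ext y
          rw [real_inner_smul_right, real_inner_self_eq_norm_sq,
            mul_inv_cancel_right₀ (pow_ne_zero 2 (norm_ne_zero_iff.2 ha))]
        rw [← hrecover]
        exact ((differentiableAt_const a).inner ℝ h).mul_const (‖a‖ ^ 2)⁻¹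
      rw [fderiv_zero_of_not_differentiableAt this, fderiv_zero_of_not_differentiableAt hψ]
      ext; simp
  ext q
  simp [gradMat, dyad, hsmul, hgrad, mul_comm]

/-- With finitely many gradients the integrands are simple functions even if `w` is not measurable,
so that the Bochner integral in `IsQuasiconvex` does not degenerate to its junk value `0`. -/
theorem integrableOn_comp_gradMat (w : Mat m n → ℝ) {φ : Vec n → Vec m}
    (hfin : (range (gradMat φ)).Finite) {Ω : Set (Vec n)} (hΩ : volume Ω < ⊤) :
    IntegrableOn (fun x ↦ w (gradMat φ x)) Ω := by
  have : IsFiniteMeasure (volume.restrict Ω) := isFiniteMeasure_restrict.2 hΩ.ne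
  let G : SimpleFunc (Vec n) (Mat m n) :=
    ⟨gradMat φ, fun A ↦ measurable_gradMat φ (measurableSet_singleton A), hfin⟩
  exact (G.map w).integrable_of_isFiniteMeasure

end Matrices

section Tent

variable {n : ℕ} (j : Fin n) {r Λ : ℝ} {x : Vec n}

/-- The half of the cube `(-r, r)ⁿ` on which the `j`-th coordinate is positive. The norm of
`x.ofLp` is the sup norm of `x`. -/
def halfCube (r : ℝ) : Set (Vec n) :=
  {x | 0 < x j ∧ ‖x.ofLp‖ < r}

theorem isOpen_halfCube (r : ℝ) : IsOpen (halfCube j r) :=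
  .inter (isOpen_lt (f := fun _ ↦ (0 : ℝ)) (g := fun x : Vec n ↦ x j) (by fun_prop) (by fun_prop))
    (isOpen_lt (f := fun x : Vec n ↦ ‖x.ofLp‖) (g := fun _ ↦ r) (by fun_prop) (by fun_prop))

theorem halfCube_mono {r s : ℝ} (h : r ≤ s) : halfCube j r ⊆ halfCube j s :=
  fun _ hx ↦ ⟨hx.1, hx.2.trans_le h⟩

theorem halfCube_eq_smul (hr : 0 < r) : halfCube j r = r • halfCube j 1 := by
  ext x
  rw [mem_smul_set_iff_inv_smul_mem₀ hr.ne']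
  simp [halfCube, norm_smul, abs_of_pos hr, hr, inv_mul_lt_iff₀ hr]

theorem isBounded_halfCube (r : ℝ) : Bornology.IsBounded (halfCube j r) := by
  refine ((isBounded_ball (x := (0 : Fin n → ℝ)) (r := r)).isCompact_closure.image
    (PiLp.continuous_toLp 2 _)).isBounded.subset fun x hx ↦ ⟨x.ofLp, subset_closure ?_, rfl⟩
  simpa using hx.2

theorem measureReal_halfCube_pos : 0 < volume.real (halfCube j 1) := by
  have hmem : WithLp.toLp 2 (fun _ ↦ (1 / 2 : ℝ)) ∈ halfCube j 1 :=
    ⟨by norm_num, (pi_norm_const_le (1 / 2 : ℝ)).trans_lt (by norm_num)⟩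
  exact ENNReal.toReal_pos ((isOpen_halfCube j 1).measure_pos volume ⟨_, hmem⟩).ne'
    (isBounded_halfCube j 1).measure_lt_top.ne

theorem measureReal_halfCube (hr : 0 < r) :
    volume.real (halfCube j r) = r ^ n * volume.real (halfCube j 1) := by
  rw [halfCube_eq_smul j hr, Measure.real, Measure.addHaar_smul_of_nonneg _ hr.le,
    ENNReal.toReal_mul, ENNReal.toReal_ofReal (by positivity), finrank_euclideanSpace_fin,
    Measure.real]

/-- The piecewise affine profile supported in the half cube `halfCube j 1`: it has slope `1` in
direction `j` on most of the half cube and falls to zero with slope `Λ` near the other faces. -/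
def tent (Λ : ℝ) (x : Vec n) : ℝ :=
  max 0 (min (x j) (Λ * (1 - ‖x.ofLp‖)))

theorem exists_lipschitzWith_tent (Λ : ℝ) : ∃ K, LipschitzWith K (tent j Λ) := by
  have hcoord : LipschitzWith _ fun x : Vec n ↦ x j :=
    (EuclideanSpace.proj j : Vec n →L[ℝ] ℝ).lipschitz
  have hnorm := lipschitzWith_one_norm.comp (PiLp.lipschitzWith_ofLp 2 fun _ : Fin n ↦ ℝ)
  have hslope := (lipschitzWith_smul Λ).comp ((LipschitzWith.const (1 : ℝ)).sub hnorm)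
  exact ⟨_, (LipschitzWith.const (0 : ℝ)).max (hcoord.min hslope)⟩

theorem tent_nonneg (Λ : ℝ) (x : Vec n) : 0 ≤ tent j Λ x :=
  le_max_left _ _

variable {j}

theorem tent_eq_zero_of_notMem (hΛ : 0 ≤ Λ) (hx : x ∉ halfCube j 1) : tent j Λ x = 0 := by
  refine max_eq_left (not_lt.1 fun h ↦ hx ?_)
  obtain ⟨hcoord, hnorm⟩ := lt_min_iff.1 h
  exact ⟨hcoord, sub_pos.1 (pos_of_mul_pos_right hnorm hΛ)⟩

theorem tent_eq_apply (hΛ : 0 ≤ Λ) (hr : r ≤ Λ * (1 - r)) (hx : x ∈ halfCube j r) :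
    tent j Λ x = x j := by
  obtain ⟨hpos, hnorm⟩ := hx
  have hle : x j ≤ Λ * (1 - ‖x.ofLp‖) :=
    calc x j ≤ ‖x.ofLp‖ := (le_abs_self _).trans (norm_le_pi_norm x.ofLp j)
      _ ≤ r := hnorm.le
      _ ≤ Λ * (1 - r) := hr
      _ ≤ Λ * (1 - ‖x.ofLp‖) := by gcongr
  rw [tent, min_eq_left hle, max_eq_right hpos.le]

theorem gradient_tent_eq_zero (hΛ : 0 ≤ Λ) (hx : x ∉ halfCube j 1) : ∇ (tent j Λ) x = 0 := by
  have hmin : IsLocalMin (tent j Λ) x := Eventually.of_forall fun y ↦ by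
    rw [tent_eq_zero_of_notMem hΛ hx]
    exact tent_nonneg j Λ y
  rw [gradient, hmin.fderiv_eq_zero, map_zero]

theorem gradient_tent_eq_single (hΛ : 0 ≤ Λ) (hr : r ≤ Λ * (1 - r)) (hx : x ∈ halfCube j r) :
    ∇ (tent j Λ) x = EuclideanSpace.single j 1 := by
  have htent : tent j Λ =ᶠ[𝓝 x] toDual ℝ (Vec n) (EuclideanSpace.single j 1) := by
    filter_upwards [(isOpen_halfCube j r).mem_nhds hx] with y hy
    rw [tent_eq_apply hΛ hr hy]
    simp [EuclideanSpace.inner_single_left]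
  rw [gradient, htent.fderiv_eq, ContinuousLinearMap.fderiv, LinearIsometryEquiv.symm_apply_apply]

variable (j)

/-- The affine pieces `y ↦ ⟪b, y⟫ + c` of `tent j Λ`, encoded as the pairs `(b, c)`. -/
def tentPieces (Λ : ℝ) : Set (Vec n × ℝ) :=
  {(0, 0), (EuclideanSpace.single j 1, 0)} ∪
    range fun p : Fin n × Bool ↦ (EuclideanSpace.single p.1 (bif p.2 then Λ else -Λ), Λ)

theorem finite_tentPieces (Λ : ℝ) : (tentPieces j Λ).Finite :=
  (Set.toFinite _).union (finite_range _)

variable {j} in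
theorem norm_fst_le_of_mem_tentPieces (hΛ : 1 ≤ Λ) {p : Vec n × ℝ} (hp : p ∈ tentPieces j Λ) :
    ‖p.1‖ ≤ Λ := by
  have hΛ0 : 0 ≤ Λ := by linarith
  rcases hp with (rfl | rfl) | ⟨⟨k, b⟩, rfl⟩
  · simpa using hΛ0
  · simpa using hΛ
  · cases b <;> simp [abs_of_nonneg hΛ0]

theorem exists_mem_tentPieces (Λ : ℝ) (y : Vec n) :
    ∃ p ∈ tentPieces j Λ, tent j Λ y = ⟪p.1, y⟫_ℝ + p.2 := by
  rcases max_choice 0 (min (y j) (Λ * (1 - ‖y.ofLp‖))) with hzero | hmin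
  · exact ⟨(0, 0), by simp [tentPieces], by simp [tent, hzero]⟩
  rcases min_choice (y j) (Λ * (1 - ‖y.ofLp‖)) with hcoord | hnorm
  · refine ⟨(EuclideanSpace.single j 1, 0), by simp [tentPieces], ?_⟩
    rw [tent, hmin, hcoord]
    simp [EuclideanSpace.inner_single_left]
  have : Nonempty (Fin n) := ⟨j⟩
  obtain ⟨k, hk⟩ := Finite.exists_max fun k ↦ |y k|
  have hsup : ‖y.ofLp‖ = |y k| :=
    le_antisymm ((pi_norm_le_iff_of_nonneg (abs_nonneg _)).2 hk) (norm_le_pi_norm y.ofLp k)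
  rw [tent, hmin, hnorm, hsup]
  rcases abs_choice (y k) with habs | habs
  · refine ⟨_, .inr ⟨(k, false), rfl⟩, ?_⟩
    simp only [habs, cond_false, EuclideanSpace.inner_single_left, Real.ringHom_apply]
    ring
  · refine ⟨_, .inr ⟨(k, true), rfl⟩, ?_⟩
    simp only [habs, cond_true, EuclideanSpace.inner_single_left, Real.ringHom_apply]
    ring

theorem gradient_tent_mem (Λ : ℝ) (x : Vec n) :
    ∇ (tent j Λ) x ∈ insert 0 (Prod.fst '' tentPieces j Λ) :=
  gradient_mem_of_piecewise_affine (finite_tentPieces j Λ) (exists_mem_tentPieces j Λ) x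

theorem finite_range_gradient_tent (Λ : ℝ) : (range (∇ (tent j Λ))).Finite :=
  (((finite_tentPieces j Λ).image _).insert 0).subset (range_subset_iff.2 (gradient_tent_mem j Λ))

theorem norm_gradient_tent_le (hΛ : 1 ≤ Λ) (x : Vec n) : ‖∇ (tent j Λ) x‖ ≤ Λ := by
  rcases gradient_tent_mem j Λ x with hzero | ⟨p, hp, hpx⟩
  · rw [hzero, norm_zero]
    linarith
  · rw [← hpx]
    exact norm_fst_le_of_mem_tentPieces hΛ hp

end Tent

namespace IsQuasiconvex

variable {m n : ℕ} {v : Mat m n → ℝ}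

theorem integral_sub_nonneg (hv : IsQuasiconvex v) (s : Mat m n) {φ : Vec n → Vec m}
    (hφ : ∃ K, LipschitzWith K φ) (hsupp : HasCompactSupport φ)
    (hfin : (range (gradMat φ)).Finite) :
    0 ≤ ∫ x, (v (s + gradMat φ x) - v s) := by
  obtain ⟨R, hR⟩ := hsupp.isBounded.subset_ball 0
  have hfinite : volume (ball (0 : Vec n) R) < ⊤ := measure_ball_lt_top
  have hmean := hv (ball 0 R) isOpen_ball isBounded_ball s φ hφ hR
  have hconst : ∫ _ in ball (0 : Vec n) R, v s = v s * (volume (ball (0 : Vec n) R)).toReal := by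
    simp [Measure.real, mul_comm]
  have hoff : ∀ x ∉ ball (0 : Vec n) R, v (s + gradMat φ x) - v s = 0 := fun x hx ↦ by
    simp [gradMat_eq_zero_of_notMem_tsupport fun h ↦ hx (hR h)]
  rw [← setIntegral_eq_integral_of_forall_compl_eq_zero hoff,
    integral_sub (integrableOn_comp_gradMat (fun A ↦ v (s + A)) hfin hfinite)
      (integrableOn_const hfinite.ne), hconst]
  exact sub_nonneg.2 hmean

theorem sub_mul_measureReal_le (hv : IsQuasiconvex v) {s A : Mat m n} {M : ℝ}
    {φ : Vec n → Vec m} {U K : Set (Vec n)}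
    (hφ : ∃ L, LipschitzWith L φ) (hsupp : HasCompactSupport φ)
    (hfin : (range (gradMat φ)).Finite) (hM : ∀ x, |v (s + gradMat φ x)| ≤ M) (hMs : |v s| ≤ M)
    (hU : MeasurableSet U) (hUK : U ⊆ K) (hK : volume K < ⊤)
    (hgradU : ∀ x ∈ U, gradMat φ x = A) (hgradK : ∀ x ∉ K, gradMat φ x = 0) :
    (v s - v (s + A)) * volume.real U ≤ 2 * M * volume.real (K \ U) := by
  let incr : Vec n → ℝ := fun x ↦ v (s + gradMat φ x) - v s
  have hint : IntegrableOn incr K := integrableOn_comp_gradMat (fun B ↦ v (s + B) - v s) hfin hK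
  have hsplit : ∫ x, incr x = (∫ x in U, incr x) + ∫ x in K \ U, incr x := by
    have hoff : ∀ x ∉ K, incr x = 0 := fun x hx ↦ by simp [incr, hgradK x hx]
    rw [setIntegral_sdiff hU hint hUK, add_sub_cancel,
      setIntegral_eq_integral_of_forall_compl_eq_zero hoff]
  have hcore : ∫ x in U, incr x = (v (s + A) - v s) * volume.real U := by
    have hconst : EqOn incr (fun _ ↦ v (s + A) - v s) U := fun x hx ↦ by simp [incr, hgradU x hx]
    rw [setIntegral_congr_fun hU hconst, setIntegral_const, smul_eq_mul, mul_comm]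
  have hrest : ∫ x in K \ U, incr x ≤ 2 * M * volume.real (K \ U) := by
    refine (Real.le_norm_self _).trans (norm_setIntegral_le_of_norm_le_const
      ((measure_mono sdiff_subset).trans_lt hK) fun x _ ↦ ?_)
    exact (abs_sub _ _).trans (by linarith [hM x])
  have hnonneg : 0 ≤ ∫ x, incr x := hv.integral_sub_nonneg s hφ hsupp hfin
  linarith

theorem sub_dyad_mul_measureReal_le (hv : IsQuasiconvex v) {s : Mat m n} (a : Vec m) (j : Fin n)
    {r Λ M : ℝ} (hΛ : 1 ≤ Λ) (hr : r ≤ Λ * (1 - r)) (hr1 : r ≤ 1)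
    (hM : ∀ q ∈ closedBall s (‖a‖ * Λ), |v q| ≤ M) :
    (v s - v (s + dyad a (EuclideanSpace.single j 1))) * volume.real (halfCube j r) ≤
      2 * M * volume.real (halfCube j 1 \ halfCube j r) := by
  have hΛ0 : 0 ≤ Λ := by linarith
  have hgrad (x : Vec n) : gradMat (fun y ↦ tent j Λ y • a) x = dyad a (∇ (tent j Λ) x) :=
    gradMat_smul_const _ a x
  have hlip : ∃ L, LipschitzWith L fun y ↦ tent j Λ y • a := by
    obtain ⟨L, hL⟩ := exists_lipschitzWith_tent j Λ
    exact ⟨_, (ContinuousLinearMap.toSpanSingleton ℝ a).lipschitz.comp hL⟩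
  have hsupp : HasCompactSupport fun y ↦ tent j Λ y • a :=
    .intro (isBounded_halfCube j 1).isCompact_closure fun x hx ↦ by
      simp [tent_eq_zero_of_notMem hΛ0 fun h ↦ hx (subset_closure h)]
  have hfin : (range (gradMat fun y ↦ tent j Λ y • a)).Finite := by
    refine ((finite_range_gradient_tent j Λ).image (dyad a)).subset (range_subset_iff.2 fun x ↦ ?_)
    exact ⟨_, mem_range_self x, (hgrad x).symm⟩
  refine hv.sub_mul_measureReal_le hlip hsupp hfin (fun x ↦ hM _ ?_)
    (hM s (mem_closedBall_self (by positivity))) (isOpen_halfCube j r).measurableSet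
    (halfCube_mono j hr1) (isBounded_halfCube j 1).measure_lt_top (fun x hx ↦ ?_) fun x hx ↦ ?_
  · rw [mem_closedBall_iff_norm, add_sub_cancel_left, hgrad, norm_dyad]
    gcongr
    exact norm_gradient_tent_le j hΛ x
  · rw [hgrad, gradient_tent_eq_single hΛ0 hr hx]
  · rw [hgrad, gradient_tent_eq_zero hΛ0 hx, dyad_zero]

theorem sub_dyad_le (hv : IsQuasiconvex v) {s : Mat m n} (a : Vec m) (j : Fin n) {Λ M : ℝ}
    (hΛ : 1 ≤ Λ) (hM : ∀ q ∈ closedBall s (‖a‖ * Λ), |v q| ≤ M) :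
    v s - v (s + dyad a (EuclideanSpace.single j 1)) ≤ 4 * M * (n / Λ) := by
  have : 0 < Λ := by linarith
  -- `r` solves `r = Λ * (1 - r)`.
  obtain ⟨r, hr0, hr1, hrΛ, hr⟩ : ∃ r : ℝ, 0 < r ∧ r ≤ 1 ∧ 1 - r ≤ 1 / Λ ∧ r = Λ * (1 - r) := by
    have hsub : 1 - Λ / (1 + Λ) = 1 / (1 + Λ) := by field_simp; ring
    refine ⟨Λ / (1 + Λ), by positivity, (div_le_one (by positivity)).2 (by linarith), ?_, ?_⟩
    · rw [hsub]
      gcongr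
      linarith
    · rw [hsub, mul_one_div]
  set D := v s - v (s + dyad a (EuclideanSpace.single j 1))
  have hMs : |v s| ≤ M := hM s (mem_closedBall_self (by positivity))
  have hM0 : 0 ≤ M := (abs_nonneg _).trans hMs
  have hD : D ≤ 2 * M := by
    have hend : |v (s + dyad a (EuclideanSpace.single j 1))| ≤ M := hM _ <| by
      simpa [norm_dyad] using le_mul_of_one_le_right (norm_nonneg a) hΛ
    linarith [(abs_le.1 hMs).2, (abs_le.1 hend).1]
  have hscale : D * r ^ n ≤ 2 * M * (1 - r ^ n) := by
    have hmass := hv.sub_dyad_mul_measureReal_le a j hΛ hr.le hr1 hM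
    rw [measureReal_sdiff (halfCube_mono j hr1) (isOpen_halfCube j r).measurableSet
      (isBounded_halfCube j 1).measure_lt_top.ne, measureReal_halfCube j hr0] at hmass
    refine le_of_mul_le_mul_right ?_ (measureReal_halfCube_pos j)
    linarith
  have hpow : 0 ≤ 1 - r ^ n := sub_nonneg.2 (pow_le_one₀ hr0.le hr1)
  calc D = D * r ^ n + D * (1 - r ^ n) := by ring
    _ ≤ 2 * M * (1 - r ^ n) + 2 * M * (1 - r ^ n) := by gcongr
    _ = 4 * M * (1 - r ^ n) := by ring
    _ ≤ 4 * M * (n * (1 - r)) := by gcongr; exact one_sub_pow_le_mul_one_sub hr0.le n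
    _ ≤ 4 * M * (n * (1 / Λ)) := by gcongr
    _ = 4 * M * (n / Λ) := by rw [mul_one_div]

theorem sub_dyad_le_of_norm_le (hv : IsQuasiconvex v) {s : Mat m n} {a : Vec m} (j : Fin n)
    {R M : ℝ} (ha : ‖a‖ ≤ R) (hM : ∀ q ∈ closedBall s R, |v q| ≤ M) :
    v s - v (s + dyad a (EuclideanSpace.single j 1)) ≤ 4 * n * (M / R) * ‖a‖ := by
  rcases eq_or_ne a 0 with rfl | ha0
  · simp
  have hpos : 0 < ‖a‖ := norm_pos_iff.2 ha0
  refine (hv.sub_dyad_le a j (Λ := R / ‖a‖) ((one_le_div hpos).2 ha) (M := M) ?_).trans_eq ?_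
  · rwa [mul_div_cancel₀ _ hpos.ne']
  · field_simp

theorem sub_columnPart_le (hv : IsQuasiconvex v) {s d : Mat m n} {R M : ℝ} (hd : ‖d‖ ≤ R)
    (hM : ∀ q ∈ closedBall s (2 * R), |v q| ≤ M) (T : Finset (Fin n)) :
    v s - v (s + columnPart d T) ≤ T.card * (4 * n * (M / R) * ‖d‖) := by
  have hR : 0 ≤ R := (norm_nonneg d).trans hd
  have hM0 : 0 ≤ M := (abs_nonneg _).trans (hM s (mem_closedBall_self (by positivity)))
  induction T using Finset.induction_on with
  | empty => simp
  | insert j T hj ih =>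
    obtain ⟨a, had, hinsert⟩ := exists_columnPart_insert d hj
    have hball : closedBall (s + columnPart d T) R ⊆ closedBall s (2 * R) := by
      refine closedBall_subset_closedBall' ?_
      rw [dist_self_add_left]
      linarith [norm_columnPart_le d T]
    have hstep := hv.sub_dyad_le_of_norm_le j (had.trans hd) fun q hq ↦ hM q (hball hq)
    have hmono : 4 * n * (M / R) * ‖a‖ ≤ 4 * n * (M / R) * ‖d‖ := by gcongr
    rw [hinsert, ← add_assoc, Finset.card_insert_of_notMem hj]
    push_cast
    linarith

theorem sub_le_of_abs_le (hv : IsQuasiconvex v) {s₁ s₂ : Mat m n} {R M : ℝ}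
    (hR : ‖s₂ - s₁‖ ≤ R) (hM : ∀ q ∈ closedBall s₁ (2 * R), |v q| ≤ M) :
    v s₁ - v s₂ ≤ 4 * n ^ 2 * (M / R) * ‖s₂ - s₁‖ := by
  have h := hv.sub_columnPart_le hR hM Finset.univ
  rw [columnPart_univ, add_sub_cancel, Finset.card_univ, Fintype.card_fin] at h
  linarith

theorem sub_le_of_growth (hv : IsQuasiconvex v) {p C R : ℝ} (hp : 0 ≤ p) (hC : 0 ≤ C)
    (hgrowth : ∀ s, |v s| ≤ C * (1 + ‖s‖ ^ p)) {s₁ s₂ : Mat m n} (hR1 : 1 ≤ R)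
    (hR : ‖s₁‖ + ‖s₂‖ ≤ R) :
    v s₁ - v s₂ ≤ 4 * n ^ 2 * (C * (1 + 3 ^ p) * R ^ (p - 1)) * ‖s₂ - s₁‖ := by
  have hR0 : 0 < R := by linarith
  have hpow : 1 ≤ R ^ p := Real.one_le_rpow hR1 hp
  have hbound : ∀ q ∈ closedBall s₁ (2 * R), |v q| ≤ C * (1 + 3 ^ p) * R ^ p := fun q hq ↦ by
    have hq3 : ‖q‖ ≤ 3 * R := by
      linarith [norm_le_norm_add_norm_sub' q s₁, mem_closedBall_iff_norm.1 hq, norm_nonneg s₂]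
    calc |v q| ≤ C * (1 + ‖q‖ ^ p) := hgrowth q
      _ ≤ C * (R ^ p + (3 * R) ^ p) := by gcongr
      _ = C * (1 + 3 ^ p) * R ^ p := by
        rw [Real.mul_rpow (by norm_num) hR0.le]
        ring
  have hdist : ‖s₂ - s₁‖ ≤ R := by linarith [norm_sub_le s₂ s₁]
  refine (hv.sub_le_of_abs_le hdist hbound).trans_eq ?_
  rw [Real.rpow_sub_one hR0.ne', mul_div_assoc]

end IsQuasiconvex

/-- a quasiconvex function with `p`-growth is `p`-Lipschitz. -/
theorem stmt0 {m n : ℕ} (p C : ℝ) (hp : 1 ≤ p) (hC : 0 < C)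
    (v : Mat m n → ℝ) (hqc : IsQuasiconvex v)
    (hgrowth : ∀ s : Mat m n, |v s| ≤ C * (1 + ‖s‖ ^ p)) :
    ∃ α : ℝ, 0 ≤ α ∧ ∀ s₁ s₂ : Mat m n,
      |v s₁ - v s₂| ≤ α * (1 + ‖s₁‖ ^ (p - 1) + ‖s₂‖ ^ (p - 1)) * ‖s₁ - s₂‖ := by
  refine ⟨4 * n ^ 2 * (C * (1 + 3 ^ p)) * 3 ^ (p - 1), by positivity, fun s₁ s₂ ↦ ?_⟩
  set R := 1 + ‖s₁‖ + ‖s₂‖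
  have hR1 : 1 ≤ R := by linarith [norm_nonneg s₁, norm_nonneg s₂]
  have hp0 : 0 ≤ p := by linarith
  have habs : |v s₁ - v s₂| ≤ 4 * n ^ 2 * (C * (1 + 3 ^ p) * R ^ (p - 1)) * ‖s₁ - s₂‖ := by
    have h₁₂ := hqc.sub_le_of_growth hp0 hC.le hgrowth (s₁ := s₁) (s₂ := s₂) hR1 (by linarith)
    have h₂₁ := hqc.sub_le_of_growth hp0 hC.le hgrowth (s₁ := s₂) (s₂ := s₁) hR1 (by linarith)
    exact abs_sub_le_iff.2 ⟨norm_sub_rev s₁ s₂ ▸ h₁₂, h₂₁⟩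
  have hpow : R ^ (p - 1) ≤ 3 ^ (p - 1) * (1 + ‖s₁‖ ^ (p - 1) + ‖s₂‖ ^ (p - 1)) := by
    simpa using rpow_add_add_le zero_le_one (norm_nonneg s₁) (norm_nonneg s₂) (sub_nonneg.2 hp)
  calc |v s₁ - v s₂|
      ≤ 4 * n ^ 2 * (C * (1 + 3 ^ p) * R ^ (p - 1)) * ‖s₁ - s₂‖ := habs
    _ ≤ 4 * n ^ 2 * (C * (1 + 3 ^ p) *
          (3 ^ (p - 1) * (1 + ‖s₁‖ ^ (p - 1) + ‖s₂‖ ^ (p - 1)))) * ‖s₁ - s₂‖ := by gcongr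
    _ = _ := by ring
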